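/- Let x : ℝ → ℝ² be a C^∞ curve parametrized by affine arc length with affine curvature k, and fix s₀ ∈ ℝ. Define G(s) := ω(x'(s), x(s) − x(s₀)) / ω(x'(s), x'(s₀)) for s near s₀ (with G(s₀) = 0). Then there exist δ > 0 and a C^∞ function τ : (s₀ − δ, s₀ + δ) → ℝ with τ(s₀) = s₀ and τ'(s₀) = −1, such that G(s) = −G(τ(s)) for all |s − s₀| < δ, and moreover τ(s) = 2s₀ − s − (8/120)·k'(s₀)·(s − s₀)⁴ + o((s − s₀)⁵) as s → s₀. -/

import Mathlib

open Filter
open scoped Topology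

/-- The standard area form on the plane: `ω(u,v) = u₁v₂ − u₂v₁`. -/
noncomputable def om (u v : ℝ × ℝ) : ℝ := u.1 * v.2 - u.2 * v.1

/-!
Up to sign, the numerator `n` and the denominator `d` of `G` solve the Hill equations
`n'' = 1 - k n` and `d'' = -k d`, because `x''' = -k x'`. With `t = s - s₀`, their Taylor
expansions give `G = t / 2 + k(s₀) / 24 * t³ + k'(s₀) / 60 * t⁴ + O(t⁵)` with a smooth error term,
so `G` is a local diffeomorphism and `τ = G⁻¹ ∘ (-G)`. The polynomial
`σ = 2 s₀ - s - k'(s₀) / 15 * t⁴` solves `G = -G ∘ σ` up to `o(t⁵)`, which transfers to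
`τ - σ` since `G⁻¹` is Lipschitz near `0`.
-/

section OddReflection

variable {𝕜 : Type*} [RCLike 𝕜] {n : WithTop ℕ∞} {f : 𝕜 → 𝕜} {a : 𝕜}

theorem exists_contDiffAt_local_rightInverse (hf : ∀ᶠ x in 𝓝 a, ContDiffAt 𝕜 n f x) (hn : n ≠ 0)
    (hfa : deriv f a ≠ 0) :
    ∃ g : 𝕜 → 𝕜, g (f a) = a ∧ HasStrictDerivAt g (deriv f a)⁻¹ (f a) ∧
      ∀ᶠ y in 𝓝 (f a), ContDiffAt 𝕜 n g y ∧ f (g y) = y := by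
  have hfs : HasStrictDerivAt f (deriv f a) a := hf.self_of_nhds.hasStrictDerivAt hn
  let e := (hfs.hasStrictFDerivAt_equiv hfa).toOpenPartialHomeomorph f
  have ha : a ∈ e.source := HasStrictFDerivAt.mem_toOpenPartialHomeomorph_source _
  have hea : e.symm (f a) = a := e.left_inv ha
  have hderiv : ∀ᶠ x in 𝓝 a, deriv f x ≠ 0 := by
    have hcont : ContinuousAt (deriv f) a :=
      (hf.self_of_nhds.continuousAt_fderiv hn).clm_apply continuousAt_const
    exact hcont.eventually_ne hfa
  have hsymm : Tendsto e.symm (𝓝 (f a)) (𝓝 a) := e.tendsto_symm ha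
  refine ⟨e.symm, hea, hfs.to_localInverse hfa, ?_⟩
  filter_upwards [e.open_target.mem_nhds (e.map_source ha), hsymm.eventually (hf.and hderiv)]
    with y hy ⟨hfy, hfy'⟩
  exact ⟨e.contDiffAt_symm_deriv hfy' hy (hfy.differentiableAt hn).hasDerivAt hfy, e.right_inv hy⟩

theorem exists_contDiffAt_eq_neg_comp (hf : ∀ᶠ x in 𝓝 a, ContDiffAt 𝕜 n f x) (hn : n ≠ 0)
    (hfa : f a = 0) (hfa' : deriv f a ≠ 0) :
    ∃ τ : 𝕜 → 𝕜, τ a = a ∧ HasDerivAt τ (-1) a ∧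
      ∀ᶠ x in 𝓝 a, ContDiffAt 𝕜 n τ x ∧ f x = -f (τ x) := by
  obtain ⟨g, hga, hg', hg⟩ := exists_contDiffAt_local_rightInverse hf hn hfa'
  have hneg : -f a = f a := by rw [hfa, neg_zero]
  have hfd : HasDerivAt f (deriv f a) a := (hf.self_of_nhds.differentiableAt hn).hasDerivAt
  refine ⟨fun x => g (-f x), (congrArg g hneg).trans hga, ?_, ?_⟩
  · refine (HasDerivAt.comp a (hneg ▸ hg'.hasDerivAt) hfd.neg).congr_deriv ?_
    rw [mul_neg, inv_mul_cancel₀ hfa']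
  · have hlim : Tendsto (fun x => -f x) (𝓝 a) (𝓝 (f a)) := by
      have := hfd.continuousAt.tendsto.neg
      rwa [hneg] at this
    filter_upwards [hf, hlim.eventually hg] with x hfx ⟨hgx, hinv⟩
    exact ⟨hgx.comp x hfx.neg, by rw [hinv, neg_neg]⟩

theorem isBigO_sub_comp_sub_of_hasStrictDerivAt {α : Type*} {l : Filter α} {u v : α → 𝕜} {f' : 𝕜}
    (hf : HasStrictDerivAt f f' a) (hf' : f' ≠ 0) (hu : Tendsto u l (𝓝 a))
    (hv : Tendsto v l (𝓝 a)) :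
    (fun i => u i - v i) =O[l] fun i => f (u i) - f (v i) :=
  (hf.isTheta_sub hf').isBigO_symm.comp_tendsto (hu.prodMk_nhds hv)

end OddReflection

section ReflectionExpansion

open scoped ContDiff

variable {f ρ : ℝ → ℝ} {a c₁ c₃ c₄ : ℝ}

theorem isLittleO_add_comp_reflection {e : ℝ} (hρ : ContinuousAt ρ a)
    (hf : ∀ᶠ x in 𝓝 a,
      f x = c₁ * (x - a) + c₃ * (x - a) ^ 3 + c₄ * (x - a) ^ 4 + (x - a) ^ 5 * ρ x)
    (he : c₁ * e + 2 * c₄ = 0) :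
    (fun x => f x + f (2 * a - x + e * (x - a) ^ 4)) =o[𝓝 a] fun x => (x - a) ^ 5 := by
  set σ : ℝ → ℝ := fun x => 2 * a - x + e * (x - a) ^ 4 with hσ_def
  have hσa : σ a = a := by simp only [hσ_def]; ring
  have hσ : ContinuousAt σ a := by fun_prop
  let v : ℝ → ℝ := fun x => e * (x - a) ^ 3
  let q : ℝ → ℝ := fun x =>
    c₃ * e * (x - a) * (3 - 3 * v x + v x ^ 2)
      + c₄ * e * (x - a) ^ 2 * (-4 + 6 * v x - 4 * v x ^ 2 + v x ^ 3)
      + ρ x - (1 - v x) ^ 5 * ρ (σ x)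
  have hq : Tendsto q (𝓝 a) (𝓝 0) := by
    have hρσ : ContinuousAt (fun x => ρ (σ x)) a := ContinuousAt.comp (hσa.symm ▸ hρ) hσ
    have hqa : q a = 0 := by simp [q, v, hσa]
    have hvc : ContinuousAt v a := by fun_prop
    have hqc : ContinuousAt q a := by
      refine ContinuousAt.sub ?_ (((continuousAt_const.sub hvc).pow 5).mul hρσ)
      fun_prop
    simpa only [hqa] using hqc.tendsto
  have hqo : (fun x => q x * (x - a) ^ 5) =o[𝓝 a] fun x => 1 * (x - a) ^ 5 :=
    ((Asymptotics.isLittleO_one_iff ℝ).2 hq).mul_isBigO (Asymptotics.isBigO_refl _ _)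
  have hσ_lim : Tendsto σ (𝓝 a) (𝓝 a) := by simpa only [hσa] using hσ.tendsto
  refine hqo.congr' ?_ (.of_eq <| by simp only [one_mul])
  filter_upwards [hf, hσ_lim.eventually hf] with x hfx hfσ
  rw [hfx, hfσ]
  simp only [q, v, hσ_def]
  linear_combination -(x - a) ^ 4 * he

theorem exists_contDiffAt_eq_neg_comp_isLittleO {n : WithTop ℕ∞} (hn : n ≠ 0) (hc₁ : c₁ ≠ 0)
    (hf : ∀ᶠ x in 𝓝 a, ContDiffAt ℝ n ρ x ∧
      f x = c₁ * (x - a) + c₃ * (x - a) ^ 3 + c₄ * (x - a) ^ 4 + (x - a) ^ 5 * ρ x) :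
    ∃ τ : ℝ → ℝ, τ a = a ∧ HasDerivAt τ (-1) a ∧
      (∀ᶠ x in 𝓝 a, ContDiffAt ℝ n τ x ∧ f x = -f (τ x)) ∧
      (fun x => τ x - (2 * a - x - 2 * c₄ / c₁ * (x - a) ^ 4)) =o[𝓝 a] fun x => (x - a) ^ 5 := by
  have hρ : ContDiffAt ℝ n ρ a := hf.self_of_nhds.1
  have hf_eq := hf.mono fun _ hx => hx.2
  have hfc : ∀ᶠ x in 𝓝 a, ContDiffAt ℝ n f x := by
    filter_upwards [hf, hf_eq.eventually_nhds] with x hx hfx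
    have hρx := hx.1
    exact ContDiffAt.congr_of_eventuallyEq (by fun_prop) hfx
  have hfa : f a = 0 := by simp [hf_eq.self_of_nhds]
  have hfd : HasDerivAt f c₁ a := by
    have hd : HasDerivAt (fun x => x - a) 1 a := (hasDerivAt_id a).sub_const a
    refine HasDerivAt.congr_of_eventuallyEq ?_ hf_eq
    refine ((((hd.const_mul c₁).add ((hd.pow 3).const_mul c₃)).add ((hd.pow 4).const_mul c₄)).add
      ((hd.pow 5).mul (hρ.differentiableAt hn).hasDerivAt)).congr_deriv ?_
    simp
  obtain ⟨τ, hτa, hτ', hτ⟩ := exists_contDiffAt_eq_neg_comp hfc hn hfa (hfd.deriv ▸ hc₁)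
  refine ⟨τ, hτa, hτ', hτ, ?_⟩
  set e : ℝ := -(2 * c₄ / c₁) with he
  have hσ : Tendsto (fun x => 2 * a - x + e * (x - a) ^ 4) (𝓝 a) (𝓝 a) :=
    Continuous.tendsto' (by fun_prop) _ _ (by ring)
  have hτ_lim : Tendsto τ (𝓝 a) (𝓝 a) := by simpa only [hτa] using hτ'.continuousAt.tendsto
  have hce : c₁ * e + 2 * c₄ = 0 := by rw [he]; field_simp; ring
  have hres := isLittleO_add_comp_reflection hρ.continuousAt hf_eq hce
  have hfs : HasStrictDerivAt f c₁ a := hfc.self_of_nhds.hasStrictDerivAt' hfd hn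
  have hO := isBigO_sub_comp_sub_of_hasStrictDerivAt hfs hc₁ hτ_lim hσ
  refine (hO.trans_isLittleO (hres.neg_left.congr' ?_ .rfl)).congr_left fun x => by rw [he]; ring
  filter_upwards [hτ] with x hx
  linear_combination -hx.2

end ReflectionExpansion

section ParametricIntegral

open scoped ContDiff
open Function (uncurry)

variable {E : Type*} [NormedAddCommGroup E] [NormedSpace ℝ E]

theorem hasDerivAt_intervalIntegral_of_contDiff_uncurry {F : ℝ → ℝ → E}
    (hF : ContDiff ℝ 1 (uncurry F)) (a b x₀ : ℝ) :
    HasDerivAt (fun x => ∫ t in a..b, F x t)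
      (∫ t in a..b, fderiv ℝ (uncurry F) (x₀, t) (1, 0)) x₀ := by
  have hF' : Continuous fun p => fderiv ℝ (uncurry F) p (1, 0) :=
    (hF.continuous_fderiv one_ne_zero).clm_apply continuous_const
  obtain ⟨C, hC⟩ := ((isCompact_closedBall x₀ 1).prod (isCompact_uIcc (a := a) (b := b)))
    |>.exists_bound_of_continuousOn hF'.continuousOn
  have hslice {f : ℝ × ℝ → E} (hf : Continuous f) (x : ℝ) : Continuous fun t => f (x, t) :=
    hf.comp (.prodMk_right x)
  refine (intervalIntegral.hasDerivAt_integral_of_dominated_loc_of_deriv_le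
    (F' := fun x t => fderiv ℝ (uncurry F) (x, t) (1, 0)) (bound := fun _ => C)
    (Metric.ball_mem_nhds x₀ one_pos)
    (.of_forall fun x => (hslice hF.continuous x).aestronglyMeasurable)
    ((hslice hF.continuous x₀).intervalIntegrable _ _)
    (hslice hF' x₀).aestronglyMeasurable ?_ intervalIntegrable_const ?_).2
  · exact .of_forall fun t ht x hx =>
      hC (x, t) ⟨Metric.ball_subset_closedBall hx, Set.uIoc_subset_uIcc ht⟩
  · refine .of_forall fun t _ x _ => ?_
    have hFx := (hF.differentiable one_ne_zero (x, t)).hasFDerivAt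
    exact hFx.comp_hasDerivAt x ((hasDerivAt_id x).prodMk (hasDerivAt_const x t))

theorem contDiff_intervalIntegral_of_contDiff_uncurry {n : ℕ∞} {F : ℝ → ℝ → E}
    (hF : ContDiff ℝ n (uncurry F)) (a b : ℝ) :
    ContDiff ℝ n fun x => ∫ t in a..b, F x t := by
  refine contDiff_iff_forall_nat_le.2 fun m hm => ?_
  replace hF : ContDiff ℝ m (uncurry F) := hF.of_le (mod_cast hm)
  clear hm
  induction m generalizing F with
  | zero =>
    exact contDiff_zero.2 <| intervalIntegral.continuous_parametric_intervalIntegral_of_continuous'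
      hF.continuous a b
  | succ m ih =>
    have hderiv := hasDerivAt_intervalIntegral_of_contDiff_uncurry
      (hF.of_le (mod_cast Nat.le_add_left 1 m)) a b
    refine (contDiff_succ_iff_deriv (n := m)).2 ⟨fun x => (hderiv x).differentiableAt, by simp, ?_⟩
    rw [funext fun x => (hderiv x).deriv]
    exact ih ((hF.fderiv_right le_rfl).clm_apply contDiff_const)

end ParametricIntegral

section Taylor

open scoped ContDiff Nat

variable {E : Type*} [NormedAddCommGroup E] [NormedSpace ℝ E] [CompleteSpace E]

theorem exists_contDiff_taylor_remainder {f : ℝ → E} (hf : ContDiff ℝ ∞ f) (a : ℝ) (n : ℕ) :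
    ∃ r : ℝ → E, ContDiff ℝ ∞ r ∧ ∀ x, f x =
      ∑ k ∈ Finset.range (n + 1), ((x - a) ^ k / k !) • iteratedDeriv k f a
        + (x - a) ^ (n + 1) • r x := by
  refine ⟨fun x => (n ! : ℝ)⁻¹ • ∫ t in (0 : ℝ)..1,
    (1 - t) ^ n • iteratedDeriv (n + 1) f (a + t • (x - a)), ?_, fun x => ?_⟩
  · have hf' : ContDiff ℝ ∞ (iteratedDeriv (n + 1) f) := by
      rw [iteratedDeriv_eq_iterate]
      exact hf.iterate_deriv (n + 1)
    refine contDiff_const.smul (contDiff_intervalIntegral_of_contDiff_uncurry (n := ⊤) ?_ 0 1)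
    unfold Function.uncurry
    fun_prop
  · have htaylor := map_add_eq_sum_add_integral_iteratedFDeriv (x := a) (y := x - a) (n := n)
      (fun t _ => hf.contDiffAt.of_le (mod_cast le_top))
    simp only [iteratedFDeriv_apply_eq_iteratedDeriv_mul_prod, Finset.prod_const, Finset.card_univ,
      Fintype.card_fin, add_sub_cancel] at htaylor
    rw [htaylor]
    congr 1
    · exact Finset.sum_congr rfl fun k _ => by rw [smul_smul, div_eq_inv_mul]
    · rw [smul_comm ((x - a) ^ (n + 1)), ← intervalIntegral.integral_smul ((x - a) ^ (n + 1))]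
      simp only [smul_comm ((x - a) ^ (n + 1))]

end Taylor

section HillEquation

open scoped ContDiff

variable {k y : ℝ → ℝ} {c : ℝ}

theorem iteratedDeriv_add_three_of_hill (hk : ContDiff ℝ ∞ k) (hy : ContDiff ℝ ∞ y)
    (hode : ∀ s, iteratedDeriv 2 y s = c - k s * y s) (m : ℕ) (a : ℝ) :
    iteratedDeriv (m + 3) y a = -∑ i ∈ Finset.range (m + 2),
      (m + 1).choose i * iteratedDeriv i k a * iteratedDeriv (m + 1 - i) y a := by
  have hshift : iteratedDeriv (m + 3) y = iteratedDeriv (m + 1) (iteratedDeriv 2 y) := by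
    simp only [iteratedDeriv_eq_iterate, ← Function.iterate_add_apply]
  have hle : ((m + 1 : ℕ) : WithTop ℕ∞) ≤ ∞ := mod_cast le_top
  rw [hshift, funext hode, iteratedDeriv_const_sub m.succ_pos, iteratedDeriv_neg,
    iteratedDeriv_fun_mul (hk.contDiffAt.of_le hle) (hy.contDiffAt.of_le hle)]

variable {a : ℝ}

theorem exists_taylor_remainder_of_homogeneous_hill (hk : ContDiff ℝ ∞ k) (hy : ContDiff ℝ ∞ y)
    (hode : ∀ s, iteratedDeriv 2 y s = -(k s * y s)) (hya : y a = 0) (hya' : deriv y a = 1) :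
    ∃ r : ℝ → ℝ, ContDiff ℝ ∞ r ∧ ∀ s, y s =
      (s - a) - k a / 6 * (s - a) ^ 3 - deriv k a / 12 * (s - a) ^ 4 + (s - a) ^ 5 * r s := by
  have hrec := fun m => iteratedDeriv_add_three_of_hill (c := 0) hk hy (by simpa using hode) m a
  have h2 : iteratedDeriv 2 y a = 0 := by simp [hode, hya]
  have h3 : iteratedDeriv 3 y a = -k a := by
    simp [hrec 0, Finset.sum_range_succ, hya, hya']
  have h4 : iteratedDeriv 4 y a = -2 * deriv k a := by
    simp [hrec 1, Finset.sum_range_succ, hya, hya', h2]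
  obtain ⟨r, hr, hy_eq⟩ := exists_contDiff_taylor_remainder hy a 4
  refine ⟨r, hr, fun s => ?_⟩
  rw [hy_eq]
  simp only [Finset.sum_range_succ, Finset.sum_range_zero, smul_eq_mul, Nat.factorial,
    iteratedDeriv_zero, iteratedDeriv_one, hya, hya', h2, h3, h4]
  push_cast
  ring

theorem exists_taylor_remainder_of_unit_forced_hill (hk : ContDiff ℝ ∞ k) (hy : ContDiff ℝ ∞ y)
    (hode : ∀ s, iteratedDeriv 2 y s = 1 - k s * y s) (hya : y a = 0) (hya' : deriv y a = 0) :
    ∃ r : ℝ → ℝ, ContDiff ℝ ∞ r ∧ ∀ s, y s =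
      (s - a) ^ 2 / 2 - k a / 24 * (s - a) ^ 4 - deriv k a / 40 * (s - a) ^ 5
        + (s - a) ^ 6 * r s := by
  have hrec := fun m => iteratedDeriv_add_three_of_hill hk hy hode m a
  have h2 : iteratedDeriv 2 y a = 1 := by simp [hode, hya]
  have h3 : iteratedDeriv 3 y a = 0 := by
    simp [hrec 0, Finset.sum_range_succ, hya, hya']
  have h4 : iteratedDeriv 4 y a = -k a := by
    simp [hrec 1, Finset.sum_range_succ, hya, hya', h2]
  have h5 : iteratedDeriv 5 y a = -3 * deriv k a := by
    simp [hrec 2, Finset.sum_range_succ, hya, hya', h2, h3]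
  obtain ⟨r, hr, hy_eq⟩ := exists_contDiff_taylor_remainder hy a 5
  refine ⟨r, hr, fun s => ?_⟩
  rw [hy_eq]
  simp only [Finset.sum_range_succ, Finset.sum_range_zero, smul_eq_mul, Nat.factorial,
    iteratedDeriv_zero, iteratedDeriv_one, hya, hya', h2, h3, h4, h5]
  push_cast
  ring

theorem exists_taylor_remainder_of_hill_quotient {n d : ℝ → ℝ} (hk : ContDiff ℝ ∞ k)
    (hn : ContDiff ℝ ∞ n) (hd : ContDiff ℝ ∞ d)
    (hn_ode : ∀ s, iteratedDeriv 2 n s = 1 - k s * n s)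
    (hd_ode : ∀ s, iteratedDeriv 2 d s = -(k s * d s))
    (hna : n a = 0) (hna' : deriv n a = 0) (hda : d a = 0) (hda' : deriv d a = 1) :
    ∃ ρ : ℝ → ℝ, ∀ᶠ s in 𝓝 a, ContDiffAt ℝ ∞ ρ s ∧
      n s / d s = 1 / 2 * (s - a) + k a / 24 * (s - a) ^ 3 + deriv k a / 60 * (s - a) ^ 4
        + (s - a) ^ 5 * ρ s := by
  obtain ⟨rn, hrn, hn_eq⟩ := exists_taylor_remainder_of_unit_forced_hill hk hn hn_ode hna hna'
  obtain ⟨rd, hrd, hd_eq⟩ := exists_taylor_remainder_of_homogeneous_hill hk hd hd_ode hda hda'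
  let p : ℝ → ℝ := fun s => 1 / 2 + k a / 24 * (s - a) ^ 2 + deriv k a / 60 * (s - a) ^ 3
  let β : ℝ → ℝ := fun s =>
    1 - k a / 6 * (s - a) ^ 2 - deriv k a / 12 * (s - a) ^ 3 + (s - a) ^ 4 * rd s
  let R : ℝ → ℝ := fun s => rn s - p s * rd s
    + (k a / 24 + deriv k a / 60 * (s - a)) * (k a / 6 + deriv k a / 12 * (s - a))
  have hβ : ContDiff ℝ ∞ β := by fun_prop
  have hR : ContDiff ℝ ∞ R := by fun_prop
  have hd_fac (s : ℝ) : d s = (s - a) * β s := by rw [hd_eq]; simp only [β]; ring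
  have hn_fac (s : ℝ) : n s = (s - a) ^ 2 * (p s * β s) + (s - a) ^ 6 * R s := by
    rw [hn_eq]; simp only [p, β, R]; ring
  have hβ_ne : ∀ᶠ s in 𝓝 a, β s ≠ 0 := hβ.continuous.continuousAt.eventually_ne (by simp [β])
  refine ⟨fun s => R s / β s, hβ_ne.mono fun s hs => ⟨hR.contDiffAt.div hβ.contDiffAt hs, ?_⟩⟩
  rw [hn_fac, hd_fac]
  rcases eq_or_ne s a with rfl | hsa
  · simp
  · have := sub_ne_zero.2 hsa
    simp only [p]
    field_simp

end HillEquation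

section IteratedDeriv

variable {E : Type*} [NormedAddCommGroup E] [NormedSpace ℝ E] {f f' : ℝ → E}

theorem hasDerivAt_iteratedDeriv {n : WithTop ℕ∞} {m : ℕ} (hf : ContDiff ℝ n f) (hm : m < n)
    (s : ℝ) : HasDerivAt (iteratedDeriv m f) (iteratedDeriv (m + 1) f s) s := by
  rw [iteratedDeriv_succ]
  exact (hf.differentiable_iteratedDeriv m hm s).hasDerivAt

theorem hasDerivAt_deriv (hf : ContDiff ℝ 2 f) (s : ℝ) :
    HasDerivAt (deriv f) (iteratedDeriv 2 f s) s := by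
  simpa only [iteratedDeriv_one] using hasDerivAt_iteratedDeriv (m := 1) hf (by norm_num) s

theorem iteratedDeriv_two_eq_of_hasDerivAt {c : E} {s : ℝ} (hf : ∀ t, HasDerivAt f (f' t) t)
    (hf' : HasDerivAt f' c s) : iteratedDeriv 2 f s = c := by
  rw [iteratedDeriv_succ, iteratedDeriv_one, funext fun t => (hf t).deriv]
  exact hf'.deriv

end IteratedDeriv

section AreaForm

theorem om_self (u : ℝ × ℝ) : om u u = 0 := by
  simp only [om]
  ring

theorem om_zero_left (v : ℝ × ℝ) : om 0 v = 0 := by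
  simp only [om, Prod.fst_zero, Prod.snd_zero]
  ring

theorem neg_om (u v : ℝ × ℝ) : -om u v = om v u := by
  simp only [om]
  ring

theorem om_smul_right (c : ℝ) (u v : ℝ × ℝ) : om u (c • v) = c * om u v := by
  simp only [om, Prod.smul_fst, Prod.smul_snd, smul_eq_mul]
  ring

theorem eq_neg_om_smul_of_om_eq_zero {u v w : ℝ × ℝ} (huv : om u v = 1) (huw : om u w = 0) :
    w = -om v w • u := by
  simp only [om] at huv huw
  ext
  · simp only [om, Prod.smul_fst, smul_eq_mul]
    linear_combination -w.1 * huv + v.1 * huw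
  · simp only [om, Prod.smul_snd, smul_eq_mul]
    linear_combination -w.2 * huv + v.2 * huw

variable {u v : ℝ → ℝ × ℝ}

theorem contDiff_om {n : WithTop ℕ∞} (hu : ContDiff ℝ n u) (hv : ContDiff ℝ n v) :
    ContDiff ℝ n fun s => om (u s) (v s) := by
  unfold om
  fun_prop

theorem hasDerivAt_om {u' v' : ℝ × ℝ} {s : ℝ} (hu : HasDerivAt u u' s) (hv : HasDerivAt v v' s) :
    HasDerivAt (fun s => om (u s) (v s)) (om u' (v s) + om (u s) v') s := by
  have hfst {w : ℝ → ℝ × ℝ} {w' : ℝ × ℝ} (hw : HasDerivAt w w' s) :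
      HasDerivAt (fun s => (w s).1) w'.1 s := (hasFDerivAt_fst (p := w s)).comp_hasDerivAt s hw
  have hsnd {w : ℝ → ℝ × ℝ} {w' : ℝ × ℝ} (hw : HasDerivAt w w' s) :
      HasDerivAt (fun s => (w s).2) w'.2 s := (hasFDerivAt_snd (p := w s)).comp_hasDerivAt s hw
  refine (((hfst hu).mul (hsnd hv)).sub ((hsnd hu).mul (hfst hv))).congr_deriv ?_
  simp only [om]
  ring

end AreaForm

section AffineArcLength

open scoped ContDiff

/-- A plane curve parametrized by affine arc length: velocity and acceleration always span a
parallelogram of signed area one. -/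
def IsAffineArcLength (x : ℝ → ℝ × ℝ) : Prop :=
  ∀ s, om (deriv x s) (iteratedDeriv 2 x s) = 1

/-- The affine curvature `ω(x'', x''')` of a plane curve parametrized by affine arc length. -/
noncomputable def affineCurvature (x : ℝ → ℝ × ℝ) (s : ℝ) : ℝ :=
  om (iteratedDeriv 2 x s) (iteratedDeriv 3 x s)

/-- The coordinate along the tangent line at `x a` of its intersection with the tangent line at
`x s`: the two lines meet at `x a + tangentCoord x a s • x' a`. Its junk value at parallel tangents
is `0`, which at `s = a` is the continuous extension. -/
noncomputable def tangentCoord (x : ℝ → ℝ × ℝ) (a s : ℝ) : ℝ :=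
  om (deriv x s) (x s - x a) / om (deriv x s) (deriv x a)

variable {x : ℝ → ℝ × ℝ}

theorem hasDerivAt_om_deriv (hx : ContDiff ℝ 2 x) (v : ℝ × ℝ) (s : ℝ) :
    HasDerivAt (fun t => om v (deriv x t)) (om v (iteratedDeriv 2 x s)) s := by
  refine (hasDerivAt_om (hasDerivAt_const s v) (hasDerivAt_deriv hx s)).congr_deriv ?_
  rw [om_zero_left, zero_add]

theorem hasDerivAt_om_sub_deriv (hx : ContDiff ℝ 2 x) (p : ℝ × ℝ) (s : ℝ) :
    HasDerivAt (fun t => om (x t - p) (deriv x t)) (om (x s - p) (iteratedDeriv 2 x s)) s := by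
  have hx' : HasDerivAt x (deriv x s) s := (hx.differentiable two_ne_zero s).hasDerivAt
  refine (hasDerivAt_om (hx'.sub_const p) (hasDerivAt_deriv hx s)).congr_deriv ?_
  rw [om_self, zero_add]

theorem contDiff_affineCurvature (hx : ContDiff ℝ ∞ x) : ContDiff ℝ ∞ (affineCurvature x) := by
  have hxi (m : ℕ) : ContDiff ℝ ∞ (iteratedDeriv m x) := by
    rw [iteratedDeriv_eq_iterate]
    exact hx.iterate_deriv m
  exact contDiff_om (hxi 2) (hxi 3)

namespace IsAffineArcLength

theorem iteratedDeriv_three_eq (h : IsAffineArcLength x) (hx : ContDiff ℝ 3 x) (s : ℝ) :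
    iteratedDeriv 3 x s = -affineCurvature x s • deriv x s := by
  refine eq_neg_om_smul_of_om_eq_zero (h s) ?_
  have hconst : HasDerivAt (fun s => om (deriv x s) (iteratedDeriv 2 x s)) 0 s := by
    rw [funext h]
    exact hasDerivAt_const s 1
  have hderiv := hasDerivAt_om (hasDerivAt_deriv (hx.of_le (by norm_num)) s)
    (hasDerivAt_iteratedDeriv hx (m := 2) (by norm_num) s)
  simpa only [om_self, zero_add] using hderiv.unique hconst

theorem hasDerivAt_iteratedDeriv_two (h : IsAffineArcLength x) (hx : ContDiff ℝ 3 x) (s : ℝ) :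
    HasDerivAt (iteratedDeriv 2 x) (-affineCurvature x s • deriv x s) s := by
  rw [← h.iteratedDeriv_three_eq hx]
  exact hasDerivAt_iteratedDeriv hx (by norm_num) s

theorem iteratedDeriv_two_om_deriv (h : IsAffineArcLength x) (hx : ContDiff ℝ 3 x) (v : ℝ × ℝ)
    (s : ℝ) :
    iteratedDeriv 2 (fun t => om v (deriv x t)) s = -(affineCurvature x s * om v (deriv x s)) := by
  refine iteratedDeriv_two_eq_of_hasDerivAt (hasDerivAt_om_deriv (hx.of_le (by norm_num)) v) ?_
  refine (hasDerivAt_om (hasDerivAt_const s v) (h.hasDerivAt_iteratedDeriv_two hx s)).congr_deriv ?_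
  rw [om_zero_left, om_smul_right]
  ring

theorem iteratedDeriv_two_om_sub_deriv (h : IsAffineArcLength x) (hx : ContDiff ℝ 3 x)
    (p : ℝ × ℝ) (s : ℝ) :
    iteratedDeriv 2 (fun t => om (x t - p) (deriv x t)) s
      = 1 - affineCurvature x s * om (x s - p) (deriv x s) := by
  refine iteratedDeriv_two_eq_of_hasDerivAt
    (hasDerivAt_om_sub_deriv (hx.of_le (by norm_num)) p) ?_
  have hx' : HasDerivAt x (deriv x s) s := (hx.differentiable (by norm_num) s).hasDerivAt
  refine (hasDerivAt_om (hx'.sub_const p) (h.hasDerivAt_iteratedDeriv_two hx s)).congr_deriv ?_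
  rw [h s, om_smul_right]
  ring

theorem exists_tangentCoord_eq (h : IsAffineArcLength x) (hx : ContDiff ℝ ∞ x) (a : ℝ) :
    ∃ ρ : ℝ → ℝ, ∀ᶠ s in 𝓝 a, ContDiffAt ℝ ∞ ρ s ∧
      tangentCoord x a s = 1 / 2 * (s - a) + affineCurvature x a / 24 * (s - a) ^ 3
        + deriv (affineCurvature x) a / 60 * (s - a) ^ 4 + (s - a) ^ 5 * ρ s := by
  have hx₃ : ContDiff ℝ 3 x := contDiff_infty.1 hx 3
  have hx₂ : ContDiff ℝ 2 x := contDiff_infty.1 hx 2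
  have hx' : ContDiff ℝ ∞ (deriv x) := (contDiff_infty_iff_deriv.1 hx).2
  have hquot (s : ℝ) : tangentCoord x a s
      = om (x s - x a) (deriv x s) / om (deriv x a) (deriv x s) := by
    rw [tangentCoord, ← neg_om, ← neg_om (deriv x a), neg_div_neg_eq]
  simp only [hquot]
  apply exists_taylor_remainder_of_hill_quotient (contDiff_affineCurvature hx)
    (contDiff_om (hx.sub contDiff_const) hx') (contDiff_om contDiff_const hx')
    (h.iteratedDeriv_two_om_sub_deriv hx₃ _) (h.iteratedDeriv_two_om_deriv hx₃ _)
  case hna => rw [sub_self, om_zero_left]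
  case hna' => rw [(hasDerivAt_om_sub_deriv hx₂ _ a).deriv, sub_self, om_zero_left]
  case hda => exact om_self _
  case hda' => rw [(hasDerivAt_om_deriv hx₂ _ a).deriv, h a]

end IsAffineArcLength

end AffineArcLength

theorem stmt_10 (x : ℝ → ℝ × ℝ) (hx : ContDiff ℝ (⊤ : ℕ∞) x)
    (haff : ∀ s : ℝ, om (deriv x s) (iteratedDeriv 2 x s) = 1)
    (k : ℝ → ℝ) (hk : ∀ s : ℝ, k s = om (iteratedDeriv 2 x s) (iteratedDeriv 3 x s))
    (s₀ : ℝ) (G : ℝ → ℝ)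
    (hG : ∀ s : ℝ, G s = om (deriv x s) (x s - x s₀) / om (deriv x s) (deriv x s₀)) :
    ∃ δ > (0 : ℝ), ∃ τ : ℝ → ℝ,
      ContDiffOn ℝ (⊤ : ℕ∞) τ (Set.Ioo (s₀ - δ) (s₀ + δ)) ∧
      τ s₀ = s₀ ∧ deriv τ s₀ = -1 ∧
      (∀ s ∈ Set.Ioo (s₀ - δ) (s₀ + δ), G s = -G (τ s)) ∧
      (fun s : ℝ => τ s - (2 * s₀ - s - (8 / 120) * deriv k s₀ * (s - s₀) ^ 4))
        =o[𝓝 s₀] fun s : ℝ => (s - s₀) ^ 5 := by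
  obtain rfl : k = affineCurvature x := funext hk
  obtain rfl : G = tangentCoord x s₀ := funext hG
  have hx_arc : IsAffineArcLength x := haff
  obtain ⟨ρ, hρ⟩ := hx_arc.exists_tangentCoord_eq hx s₀
  obtain ⟨τ, hτ_fix, hτ_deriv, hτ, hτ_expansion⟩ :=
    exists_contDiffAt_eq_neg_comp_isLittleO (by simp) one_half_pos.ne' hρ
  obtain ⟨δ, hδ, hδτ⟩ := (nhds_basis_Ioo_pos s₀).eventually_iff.1 hτ
  refine ⟨δ, hδ, τ, fun s hs => (hδτ hs).1.contDiffWithinAt, hτ_fix, hτ_deriv.deriv,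
    fun s hs => (hδτ hs).2, hτ_expansion.congr_left fun s => ?_⟩
  ring
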